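/- Suppose that (−1)^{k+1} · F(t, k(δ + a)) < 0 for all t ∈ ℝ and all k = 1, …, 2n. Then the oscillator chain ẍᵢ = −γ ẋᵢ − V′(xᵢ − x_{i−1}) + V′(x_{i+1} − xᵢ) + F(t, xᵢ), i = 1,…,n, has a T-periodic solution: there exist C² functions xᵢ : ℝ → ℝ solving the system with xᵢ(t + T) = xᵢ(t), ẋᵢ(t + T) = ẋᵢ(t), and (2i − 1)(δ + a) < xᵢ(t) < 2i(δ + a) for all t ∈ ℝ and all i = 1,…,n. -/

import Mathlib

/-- The Morse potential `V(x) = ½(1 − e^{−(x−δ)})²`. -/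
noncomputable def morseV (δ : ℝ) (x : ℝ) : ℝ := (1 - Real.exp (-(x - δ))) ^ 2 / 2

section ChainAux

open Set MeasureTheory Filter Topology

noncomputable def chainP (μ : ℝ) (h : ℝ → ℝ) (t : ℝ) : ℝ :=
  Real.exp (μ * t) * ∫ r in Ioi t, Real.exp (-μ * r) * h r

lemma chainP_int {μ : ℝ} (hμ : 0 < μ) {h : ℝ → ℝ} (hc : Continuous h) {a b : ℝ}
    (ha : ∀ t, a ≤ h t) (hb : ∀ t, h t ≤ b) (t : ℝ) :
    IntegrableOn (fun r => Real.exp (-μ * r) * h r) (Ioi t) := by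
  have h1 : IntegrableOn (fun r => Real.exp (-μ * r) * (|a| + |b|)) (Ioi t) :=
    (exp_neg_integrableOn_Ioi t hμ).mul_const _
  refine Integrable.mono' h1 ?_ ?_
  · exact (by fun_prop : Continuous fun r => Real.exp (-μ * r) * h r).aestronglyMeasurable
  · refine Eventually.of_forall fun r => ?_
    rw [Real.norm_eq_abs, abs_mul, Real.abs_exp]
    refine mul_le_mul_of_nonneg_left ?_ (Real.exp_pos _).le
    have := ha r; have := hb r
    rw [abs_le]
    constructor
    · linarith [neg_abs_le a, abs_nonneg b]
    · linarith [le_abs_self b, abs_nonneg a]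

lemma chainP_const {μ : ℝ} (hμ : 0 < μ) (c t : ℝ) : chainP μ (fun _ => c) t = c / μ := by
  unfold chainP
  rw [integral_mul_const, integral_exp_mul_Ioi (by linarith)]
  have : Real.exp (μ * t) * Real.exp (-μ * t) = 1 := by rw [← Real.exp_add]; simp
  simp only [neg_mul] at this ⊢
  field_simp
  linear_combination c * this

lemma chainP_mono {μ : ℝ} (hμ : 0 < μ) {h k : ℝ → ℝ} (hc : Continuous h) (kc : Continuous k)
    {a b : ℝ} (ha : ∀ t, a ≤ h t) (hb : ∀ t, k t ≤ b) (hk : ∀ t, h t ≤ k t) (t : ℝ) :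
    chainP μ h t ≤ chainP μ k t := by
  unfold chainP
  refine mul_le_mul_of_nonneg_left ?_ (Real.exp_pos _).le
  refine integral_mono (chainP_int hμ hc ha (fun t => (hk t).trans (hb t)) t)
    (chainP_int hμ kc (fun t => (ha t).trans (hk t)) hb t) fun r => ?_
  exact mul_le_mul_of_nonneg_left (hk r) (Real.exp_pos _).le

lemma chainP_lt {μ : ℝ} (hμ : 0 < μ) {h k : ℝ → ℝ} (hc : Continuous h) (kc : Continuous k)
    {a b : ℝ} (ha : ∀ t, a ≤ h t) (hb : ∀ t, k t ≤ b) (hk : ∀ t, h t < k t) (t : ℝ) :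
    chainP μ h t < chainP μ k t := by
  unfold chainP
  refine mul_lt_mul_of_pos_left ?_ (Real.exp_pos _)
  have i1 := chainP_int hμ hc ha (fun t => (hk t).le.trans (hb t)) t
  have i2 := chainP_int hμ kc (fun t => (ha t).trans (hk t).le) hb t
  rw [← sub_pos, ← integral_sub i2 i1]
  have hp : ∀ r, 0 < Real.exp (-μ * r) * k r - Real.exp (-μ * r) * h r := fun r => by
    have := mul_lt_mul_of_pos_left (hk r) (Real.exp_pos (-μ * r)); linarith
  rw [integral_pos_iff_support_of_nonneg (fun r => (hp r).le) (i2.sub i1)]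
  have : Function.support (fun r => Real.exp (-μ * r) * k r - Real.exp (-μ * r) * h r) = univ := by
    ext r; simpa using (hp r).ne'
  rw [this]
  simp

lemma chainP_bd {μ : ℝ} (hμ : 0 < μ) {h : ℝ → ℝ} (hc : Continuous h)
    {a b : ℝ} (ha : ∀ t, a ≤ h t) (hb : ∀ t, h t ≤ b) (t : ℝ) :
    a / μ ≤ chainP μ h t ∧ chainP μ h t ≤ b / μ := by
  rw [← chainP_const hμ a t, ← chainP_const hμ b t]
  exact ⟨chainP_mono hμ continuous_const hc (fun _ => le_rfl) hb ha t,
    chainP_mono hμ hc continuous_const ha (fun _ => le_rfl) hb t⟩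

lemma chainP_deriv {μ : ℝ} (hμ : 0 < μ) {h : ℝ → ℝ} (hc : Continuous h)
    {a b : ℝ} (ha : ∀ t, a ≤ h t) (hb : ∀ t, h t ≤ b) (t : ℝ) :
    HasDerivAt (chainP μ h) (μ * chainP μ h t - h t) t := by
  have hcf : Continuous fun r => Real.exp (-μ * r) * h r := by fun_prop
  have e : chainP μ h = fun t => Real.exp (μ * t) *
      ((∫ r in Ioi 0, Real.exp (-μ * r) * h r) - ∫ r in (0:ℝ)..t, Real.exp (-μ * r) * h r) := by
    funext t
    rw [← intervalIntegral.integral_interval_add_Ioi (chainP_int hμ hc ha hb 0)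
      (chainP_int hμ hc ha hb t)]
    simp [chainP]
  have d1 : HasDerivAt (fun t => ∫ r in (0:ℝ)..t, Real.exp (-μ * r) * h r)
      (Real.exp (-μ * t) * h t) t :=
    intervalIntegral.integral_hasDerivAt_right (hcf.intervalIntegrable _ _)
      (hcf.stronglyMeasurableAtFilter _ _) hcf.continuousAt
  have d2 : HasDerivAt (fun t => Real.exp (μ * t)) (Real.exp (μ * t) * (μ * 1)) t :=
    ((hasDerivAt_id t).const_mul μ).exp
  have d3 := d2.mul (d1.const_sub (∫ r in Ioi 0, Real.exp (-μ * r) * h r))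
  have : Real.exp (μ * t) * Real.exp (-μ * t) = 1 := by rw [← Real.exp_add]; simp
  rw [e]
  refine d3.congr_deriv ?_
  linear_combination -h t * this

lemma chainP_per {μ : ℝ} {h : ℝ → ℝ} {T : ℝ} (hT : ∀ t, h (t + T) = h t) (t : ℝ) :
    chainP μ h (t + T) = chainP μ h t := by
  unfold chainP
  have : ∫ r in Ioi (t + T), Real.exp (-μ * r) * h r
      = ∫ r in Ioi t, Real.exp (-μ * (r + T)) * h (r + T) := by
    have := (measurePreserving_add_right volume T).setIntegral_preimage_emb
      (measurableEmbedding_addRight T) (fun r => Real.exp (-μ * r) * h r) (Ioi (t + T))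
    rw [← this]
    congr 2
    ext x; simp
  rw [this, ← integral_const_mul, ← integral_const_mul]
  congr 1
  funext r
  rw [hT, ← mul_assoc, ← mul_assoc, ← Real.exp_add, ← Real.exp_add]
  ring_nf

noncomputable def chainQ (ν : ℝ) (w : ℝ → ℝ) (t : ℝ) : ℝ := chainP ν (fun s => w (-s)) (-t)

lemma chainQ_const {μ : ℝ} (hμ : 0 < μ) (c t : ℝ) : chainQ μ (fun _ => c) t = c / μ :=
  chainP_const hμ c _

lemma chainQ_mono {μ : ℝ} (hμ : 0 < μ) {h k : ℝ → ℝ} (hc : Continuous h) (kc : Continuous k)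
    {a b : ℝ} (ha : ∀ t, a ≤ h t) (hb : ∀ t, k t ≤ b) (hk : ∀ t, h t ≤ k t) (t : ℝ) :
    chainQ μ h t ≤ chainQ μ k t :=
  chainP_mono hμ (by fun_prop) (by fun_prop) (fun t => ha (-t)) (fun t => hb (-t))
    (fun t => hk (-t)) _

lemma chainQ_lt {μ : ℝ} (hμ : 0 < μ) {h k : ℝ → ℝ} (hc : Continuous h) (kc : Continuous k)
    {a b : ℝ} (ha : ∀ t, a ≤ h t) (hb : ∀ t, k t ≤ b) (hk : ∀ t, h t < k t) (t : ℝ) :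
    chainQ μ h t < chainQ μ k t :=
  chainP_lt hμ (by fun_prop) (by fun_prop) (fun t => ha (-t)) (fun t => hb (-t))
    (fun t => hk (-t)) _

lemma chainQ_bd {μ : ℝ} (hμ : 0 < μ) {h : ℝ → ℝ} (hc : Continuous h)
    {a b : ℝ} (ha : ∀ t, a ≤ h t) (hb : ∀ t, h t ≤ b) (t : ℝ) :
    a / μ ≤ chainQ μ h t ∧ chainQ μ h t ≤ b / μ :=
  chainP_bd hμ (by fun_prop) (fun t => ha (-t)) (fun t => hb (-t)) _

lemma chainQ_deriv {μ : ℝ} (hμ : 0 < μ) {h : ℝ → ℝ} (hc : Continuous h)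
    {a b : ℝ} (ha : ∀ t, a ≤ h t) (hb : ∀ t, h t ≤ b) (t : ℝ) :
    HasDerivAt (chainQ μ h) (h t - μ * chainQ μ h t) t := by
  have d := chainP_deriv hμ (h := fun s => h (-s)) (by fun_prop) (fun t => ha (-t))
    (fun t => hb (-t)) (-t)
  have d2 := d.comp t (hasDerivAt_neg t)
  refine d2.congr_deriv ?_
  simp [chainQ]

lemma chainQ_per {μ : ℝ} {h : ℝ → ℝ} {T : ℝ} (hT : ∀ t, h (t + T) = h t) (t : ℝ) :
    chainQ μ h (t + T) = chainQ μ h t := by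
  unfold chainQ
  rw [← chainP_per (T := T) (t := -(t + T))]
  · congr 1; ring
  · intro s
    rw [← hT]; congr 1; ring

theorem chain_abstract {ι : Type*} (μ ν T D : ℝ) (hμ : 0 < μ) (hν : 0 < ν)
    (α β : ι → ℝ) (hαβ : ∀ i, α i ≤ β i) (hD : ∀ i, β i - α i ≤ D)
    (h : ℝ → (ι → ℝ) → ι → ℝ)
    (hcont : ∀ u : ℝ → ι → ℝ, (∀ i, Continuous fun t => u t i) →
      ∀ i, Continuous fun t => h t (u t) i)
    (hper : ∀ t u i, h (t + T) u i = h t u i)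
    (hmono : ∀ t u u' i, (∀ j, α j ≤ u j) → (∀ j, u j ≤ u' j) → (∀ j, u' j ≤ β j) →
      h t u i ≤ h t u' i)
    (hlo : ∀ t i, μ * ν * α i ≤ h t α i) (hhi : ∀ t i, h t β i ≤ μ * ν * β i) :
    ∃ u w : ℝ → ι → ℝ,
      (∀ t i, HasDerivAt (fun s => u s i) (w t i - ν * u t i) t) ∧
      (∀ t i, HasDerivAt (fun s => w s i) (μ * w t i - h t (u t) i) t) ∧
      (∀ t i, u (t + T) i = u t i ∧ w (t + T) i = w t i) ∧
      (∀ t i, α i ≤ u t i ∧ u t i ≤ β i) ∧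
      (∀ i, (∀ t, μ * ν * α i < h t (u t) i) → ∀ t, α i < u t i) ∧
      (∀ i, (∀ t, h t (u t) i < μ * ν * β i) → ∀ t, u t i < β i) := by
  let B : (ℝ → ι → ℝ) → ℝ → ι → ℝ := fun u t i => chainP μ (fun s => h s (u s) i) t
  let A : (ℝ → ι → ℝ) → ℝ → ι → ℝ := fun u t i => chainQ ν (fun s => B u s i) t
  let X : Set (ℝ → ι → ℝ) := {u | (∀ i s t, |u s i - u t i| ≤ ν * D * |s - t|) ∧
    (∀ t i, u (t + T) i = u t i) ∧ ∀ t i, α i ≤ u t i ∧ u t i ≤ β i}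
  have Xc : ∀ u ∈ X, ∀ i, Continuous fun t => u t i := by
    intro u hu i
    refine (LipschitzWith.of_dist_le' (K := ν * D) fun s t => ?_).continuous
    simpa [Real.dist_eq] using hu.1 i s t
  have hc : ∀ u ∈ X, ∀ i, Continuous fun s => h s (u s) i := fun u hu => hcont u (Xc u hu)
  have hl : ∀ u ∈ X, ∀ i t, μ * ν * α i ≤ h t (u t) i := fun u hu i t =>
    (hlo t i).trans (hmono t _ _ i (fun _ => le_rfl) (fun j => (hu.2.2 t j).1)
      (fun j => (hu.2.2 t j).2))
  have hh : ∀ u ∈ X, ∀ i t, h t (u t) i ≤ μ * ν * β i := fun u hu i t =>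
    (hmono t _ _ i (fun j => (hu.2.2 t j).1) (fun j => (hu.2.2 t j).2)
      (fun _ => le_rfl)).trans (hhi t i)
  have ec : ∀ c, μ * ν * c / μ = ν * c := fun c => by field_simp
  have ec' : ∀ c, ν * c / ν = c := fun c => by field_simp
  have Bd : ∀ u ∈ X, ∀ i t, HasDerivAt (fun s => B u s i) (μ * B u t i - h t (u t) i) t :=
    fun u hu i t => chainP_deriv hμ (hc u hu i) (hl u hu i) (hh u hu i) t
  have Bc : ∀ u ∈ X, ∀ i, Continuous fun s => B u s i := fun u hu i =>
    continuous_iff_continuousAt.2 fun t => (Bd u hu i t).continuousAt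
  have Bb : ∀ u ∈ X, ∀ i t, ν * α i ≤ B u t i ∧ B u t i ≤ ν * β i := fun u hu i t => by
    have := chainP_bd hμ (hc u hu i) (hl u hu i) (hh u hu i) t
    rwa [ec, ec] at this
  have Bp : ∀ u ∈ X, ∀ t i, B u (t + T) i = B u t i := fun u hu t i => by
    refine chainP_per (fun s => ?_) t
    rw [hper]
    congr 1
    funext j
    exact hu.2.1 s j
  have Ad : ∀ u ∈ X, ∀ i t, HasDerivAt (fun s => A u s i) (B u t i - ν * A u t i) t :=
    fun u hu i t => chainQ_deriv hν (Bc u hu i) (fun t => (Bb u hu i t).1)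
      (fun t => (Bb u hu i t).2) t
  have Ab : ∀ u ∈ X, ∀ t i, α i ≤ A u t i ∧ A u t i ≤ β i := fun u hu t i => by
    have := chainQ_bd hν (Bc u hu i) (fun t => (Bb u hu i t).1)
      (fun t => (Bb u hu i t).2) t
    rwa [ec', ec'] at this
  have AX : ∀ u ∈ X, A u ∈ X := by
    intro u hu
    refine ⟨fun i s t => ?_, fun t i => chainQ_per (fun s => Bp u hu s i) t, Ab u hu⟩
    have := Convex.norm_image_sub_le_of_norm_hasDerivWithin_le (s := univ) (C := ν * D)
      (fun x _ => (Ad u hu i x).hasDerivWithinAt) (fun x _ => ?_) convex_univ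
      (mem_univ t) (mem_univ s)
    · simpa using this
    · have h1 := Bb u hu i x
      have h2 := Ab u hu x i
      have h3 := mul_le_mul_of_nonneg_left h2.1 hν.le
      have h4 := mul_le_mul_of_nonneg_left h2.2 hν.le
      have h5 := mul_le_mul_of_nonneg_left (hD i) hν.le
      rw [Real.norm_eq_abs, abs_le]
      constructor <;> nlinarith
  have Amono : ∀ u ∈ X, ∀ u' ∈ X, (∀ t i, u t i ≤ u' t i) → ∀ t i, A u t i ≤ A u' t i := by
    intro u hu u' hu' huu t i
    refine chainQ_mono hν (Bc u hu i) (Bc u' hu' i) (fun t => (Bb u hu i t).1)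
      (fun t => (Bb u' hu' i t).2) (fun t => ?_) t
    refine chainP_mono hμ (hc u hu i) (hc u' hu' i) (hl u hu i) (hh u' hu' i) (fun t => ?_) t
    exact hmono t _ _ i (fun j => (hu.2.2 t j).1) (huu t) (fun j => (hu'.2.2 t j).2)
  let S : Set (ℝ → ι → ℝ) := {u | u ∈ X ∧ ∀ t i, u t i ≤ A u t i}
  have D0 : ∀ i : ι, 0 ≤ D := fun i => (sub_nonneg.2 (hαβ i)).trans (hD i)
  have αX : (fun _ => α) ∈ X := by
    refine ⟨fun i s t => ?_, fun _ _ => rfl, fun _ i => ⟨le_rfl, hαβ i⟩⟩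
    have := D0 i
    simp only [sub_self, abs_zero]
    positivity
  have αS : (fun _ => α) ∈ S := ⟨αX, fun t i => (Ab _ αX t i).1⟩
  have : Nonempty S := ⟨⟨_, αS⟩⟩
  let U : ℝ → ι → ℝ := fun t i => ⨆ u : S, u.1 t i
  have bdd : ∀ t i, BddAbove (range fun u : S => u.1 t i) := fun t i =>
    ⟨β i, by rintro _ ⟨u, rfl⟩; exact (u.2.1.2.2 t i).2⟩
  have leU : ∀ u ∈ S, ∀ t i, u t i ≤ U t i := fun u hu t i => le_ciSup (bdd t i) ⟨u, hu⟩
  have UX : U ∈ X := by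
    refine ⟨fun i s t => ?_, fun t i => ?_, fun t i => ⟨leU _ αS t i, ?_⟩⟩
    · have key : ∀ s t, U s i ≤ U t i + ν * D * |s - t| := fun s t => by
        refine ciSup_le fun u => ?_
        have h1 := (abs_le.1 (u.2.1.1 i s t)).2
        have h2 := leU u.1 u.2 t i
        linarith
      have h1 := key s t
      have h2 := key t s
      rw [abs_sub_comm] at h2
      rw [abs_le]
      constructor <;> linarith
    · exact iSup_congr fun u => u.2.1.2.1 t i
    · exact ciSup_le fun u => (u.2.1.2.2 t i).2
  have UA : ∀ t i, U t i ≤ A U t i := fun t i =>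
    ciSup_le fun u => (u.2.2 t i).trans (Amono u.1 u.2.1 U UX (leU u.1 u.2) t i)
  have AUS : A U ∈ S := ⟨AX U UX, Amono U UX _ (AX U UX) UA⟩
  have fix : A U = U := by
    funext t i
    exact le_antisymm (leU _ AUS t i) (UA t i)
  refine ⟨U, B U, fun t i => ?_, fun t i => Bd U UX i t,
    fun t i => ⟨UX.2.1 t i, Bp U UX t i⟩, UX.2.2, fun i hi t => ?_, fun i hi t => ?_⟩
  · have := Ad U UX i t
    rwa [fix] at this
  · have : ∀ t, ν * α i < B U t i := fun t => by
      have := chainP_lt hμ continuous_const (hc U UX i) (fun _ => le_rfl) (hh U UX i) hi t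
      rwa [chainP_const hμ, ec] at this
    have := chainQ_lt hν continuous_const (Bc U UX i) (fun _ => le_rfl)
      (fun t => (Bb U UX i t).2) this t
    rw [chainQ_const hν, ec'] at this
    rw [← fix]; exact this
  · have : ∀ t, B U t i < ν * β i := fun t => by
      have := chainP_lt hμ (hc U UX i) continuous_const (hl U UX i) (fun _ => le_rfl) hi t
      rwa [chainP_const hμ, ec] at this
    have := chainQ_lt hν (Bc U UX i) continuous_const
      (fun t => (Bb U UX i t).1) (fun _ => le_rfl) this t
    rw [chainQ_const hν, ec'] at this
    rw [← fix]; exact this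

lemma chain_deriv_morse (δ x : ℝ) : deriv (morseV δ) x =
    (1 - Real.exp (-(x - δ))) * Real.exp (-(x - δ)) := by
  have d1 : HasDerivAt (fun x : ℝ => Real.exp (-(x - δ))) (Real.exp (-(x - δ)) * (-1)) x :=
    (((hasDerivAt_id x).sub_const δ).neg).exp
  have d2 := ((d1.const_sub 1).pow 2).div_const 2
  have : HasDerivAt (morseV δ) ((1 - Real.exp (-(x - δ))) * Real.exp (-(x - δ))) x := by
    refine d2.congr_deriv ?_
    simp
    ring
  exact this.deriv

lemma chain_g_anti {δ r s : ℝ} (hr : δ + Real.log 2 ≤ r) (hs : r ≤ s) :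
    deriv (morseV δ) s ≤ deriv (morseV δ) r ∧
      deriv (morseV δ) r - deriv (morseV δ) s ≤ s - r := by
  rw [chain_deriv_morse, chain_deriv_morse]
  have hy : Real.exp (-(r - δ)) ≤ 1 / 2 := by
    have : Real.exp (-(r - δ)) ≤ Real.exp (-Real.log 2) := Real.exp_le_exp.2 (by linarith)
    rw [Real.exp_neg (Real.log 2), Real.exp_log (by norm_num)] at this
    linarith
  have hz : Real.exp (-(s - δ)) = Real.exp (-(r - δ)) * Real.exp (-(s - r)) := by
    rw [← Real.exp_add]; congr 1; ring
  have h1 := Real.add_one_le_exp (-(s - r))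
  have h2 : Real.exp (-(s - r)) ≤ 1 := Real.exp_le_one_iff.2 (by linarith)
  have hy0 := Real.exp_pos (-(r - δ))
  have hz0 := Real.exp_pos (-(s - δ))
  have hzy : Real.exp (-(s - δ)) ≤ Real.exp (-(r - δ)) := Real.exp_le_exp.2 (by linarith)
  have hd : Real.exp (-(r - δ)) - Real.exp (-(s - δ)) ≤ s - r := by
    rw [hz]; nlinarith
  generalize Real.exp (-(r - δ)) = y at *
  generalize Real.exp (-(s - δ)) = z at *
  constructor <;> nlinarith

lemma chain_F_lip (F : ℝ → ℝ → ℝ) (hF : ContDiff ℝ (⊤ : ℕ∞) (fun u : ℝ × ℝ => F u.1 u.2))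
    {T : ℝ} (hT : 0 < T) (hFper : ∀ t x, F (t + T) x = F t x) (R : ℝ) :
    ∃ C : ℝ, 0 ≤ C ∧ ∀ t x y, 0 ≤ x → x ≤ y → y ≤ R → F t y - F t x ≤ C * (y - x) := by
  obtain ⟨C, hC⟩ := hF.contDiffOn.exists_lipschitzOnWith (s := Icc 0 T ×ˢ Icc 0 R) (by simp)
    ((convex_Icc _ _).prod (convex_Icc _ _)) (isCompact_Icc.prod isCompact_Icc)
  refine ⟨C, C.2, fun t x y hx hxy hy => ?_⟩
  have p : Function.Periodic (fun t => F t y - F t x) T := fun t => by simp [hFper]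
  obtain ⟨s, hs, e⟩ := p.exists_mem_Ico₀ hT t
  change F t y - F t x = F s y - F s x at e
  rw [e]
  have := hC.dist_le_mul (s, y) ⟨⟨hs.1, hs.2.le⟩, ⟨hx.trans hxy, hy⟩⟩ (s, x)
    ⟨⟨hs.1, hs.2.le⟩, ⟨hx, hxy.trans hy⟩⟩
  rw [Prod.dist_eq] at this
  simp only [dist_self, Real.dist_eq] at this
  rw [abs_of_nonneg (sub_nonneg.2 hxy), max_eq_right (sub_nonneg.2 hxy)] at this
  exact (le_abs_self _).trans this

end ChainAux

set_option maxHeartbeats 1000000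

theorem oscillator_chain_periodic_solution
    (n : ℕ) (hn : 1 ≤ n) (γ δ a T : ℝ)
    (hγ : 0 < γ) (hδ : 0 < δ) (ha : Real.log 2 ≤ a) (hT : 0 < T)
    (F : ℝ → ℝ → ℝ)
    (hF : ContDiff ℝ (⊤ : ℕ∞) (fun u : ℝ × ℝ => F u.1 u.2))
    (hFper : ∀ t x, F (t + T) x = F t x)
    -- (−1)^{k+1}·F(t, k(δ+a)) < 0 for all t and k = 1,…,2n
    (hcond : ∀ t : ℝ, ∀ k : ℕ, 1 ≤ k → k ≤ 2 * n →
      (-1 : ℝ) ^ (k + 1) * F t ((k : ℝ) * (δ + a)) < 0) :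
    ∃ x v : ℝ → ℕ → ℝ,
      -- fixed boundary particles
      (∀ t, x t 0 = 0) ∧
      (∀ t, x t (n + 1) = (2 * (n : ℝ) + 1) * (δ + a)) ∧
      -- the equations of motion for i = 1,…,n
      (∀ t : ℝ, ∀ i : ℕ, 1 ≤ i → i ≤ n →
        HasDerivAt (fun s => x s i) (v t i) t ∧
        HasDerivAt (fun s => v s i)
          (-γ * v t i - deriv (morseV δ) (x t i - x t (i - 1))
            + deriv (morseV δ) (x t (i + 1) - x t i) + F t (x t i)) t) ∧
      -- T-periodicity
      (∀ t : ℝ, ∀ i : ℕ, 1 ≤ i → i ≤ n → x (t + T) i = x t i ∧ v (t + T) i = v t i) ∧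
      -- localization
      (∀ t : ℝ, ∀ i : ℕ, 1 ≤ i → i ≤ n →
        (2 * (i : ℝ) - 1) * (δ + a) < x t i ∧ x t i < 2 * (i : ℝ) * (δ + a)) := by
  set L := δ + a with hL
  have hlog : 0 < Real.log 2 := Real.log_pos (by norm_num)
  have hLpos : 0 < L := by linarith
  have hLlog : δ + Real.log 2 ≤ L := by linarith
  obtain ⟨C, hC0, hC⟩ := chain_F_lip F hF hT hFper (2 * n * L)
  set μ : ℝ := C + 2 with hμd
  have hμ : 0 < μ := by linarith
  set ν : ℝ := μ + γ with hνd
  have hν : 0 < ν := by linarith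
  have hK : C + 2 ≤ μ * ν := by nlinarith
  obtain ⟨K, hKd⟩ : ∃ K, K = μ * ν := ⟨_, rfl⟩
  rw [← hKd] at hK
  let α : ℕ → ℝ := fun i => if i = 0 then 0 else (2 * (i : ℝ) - 1) * L
  let β : ℕ → ℝ := fun i => if 1 ≤ i ∧ i ≤ n then 2 * (i : ℝ) * L else α i
  let g : ℝ → ℝ := deriv (morseV δ)
  have gc : Continuous g := by
    have : g = fun x => (1 - Real.exp (-(x - δ))) * Real.exp (-(x - δ)) :=
      funext (chain_deriv_morse δ)
    rw [this]; fun_prop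
  have ganti : ∀ r s, L ≤ r → r ≤ s → g s ≤ g r ∧ g r - g s ≤ s - r := fun r s hr hs =>
    chain_g_anti (hLlog.trans hr) hs
  have α0 : α 0 = 0 := by simp [α]
  have αs : ∀ i, α (i + 1) = (2 * (i : ℝ) + 1) * L := fun i => by
    simp only [α, if_neg (Nat.succ_ne_zero i)]; push_cast; ring
  have β0 : β 0 = 0 := by simp [β, α]
  have βs : ∀ i, i + 1 ≤ n → β (i + 1) = (2 * (i : ℝ) + 2) * L := fun i hi => by
    have e : β (i + 1) = 2 * ((i + 1 : ℕ) : ℝ) * L := if_pos ⟨by omega, hi⟩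
    rw [e]; push_cast; ring
  have βn : β (n + 1) = (2 * (n : ℝ) + 1) * L := by
    rw [← αs]; simp [β]
  have βout : ∀ i, ¬ (1 ≤ i ∧ i ≤ n) → β i = α i := fun i hi => by simp only [β, if_neg hi]
  have hαβ' : ∀ i, α i ≤ β i ∧ β i - α i ≤ L := by
    intro i
    by_cases hi : 1 ≤ i ∧ i ≤ n
    · obtain ⟨j, rfl⟩ : ∃ j, i = j + 1 := ⟨i - 1, by omega⟩
      rw [αs, βs j hi.2]
      constructor <;> linarith
    · rw [βout i hi]; constructor <;> linarith
  have gap : ∀ i, i ≤ n → L ≤ α (i + 1) - β i := by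
    intro i hi
    rcases i with _ | j
    · rw [αs, β0]; simp
    · rw [αs, βs j hi]; push_cast; linarith
  let h : ℝ → (ℕ → ℝ) → ℕ → ℝ := fun t u i =>
    if 1 ≤ i ∧ i ≤ n then K * u i + g (u i - u (i - 1)) - g (u (i + 1) - u i) - F t (u i)
    else K * α i
  have hs : ∀ t u i, i + 1 ≤ n → h t u (i + 1) =
      K * u (i + 1) + g (u (i + 1) - u i) - g (u (i + 1 + 1) - u (i + 1)) - F t (u (i + 1)) := by
    intro t u i hi
    simp [h, hi]
  have hmono : ∀ t u u' i, (∀ j, α j ≤ u j) → (∀ j, u j ≤ u' j) → (∀ j, u' j ≤ β j) →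
      h t u i ≤ h t u' i := by
    intro t u u' i h1 h2 h3
    by_cases hi : 1 ≤ i ∧ i ≤ n
    · obtain ⟨j, rfl⟩ : ∃ j, i = j + 1 := ⟨i - 1, by omega⟩
      rw [hs t u j hi.2, hs t u' j hi.2]
      have a1 := gap j (by omega)
      have a2 := gap (j + 1) hi.2
      have b0 := h1 j
      have b1 := h1 (j + 1)
      have b2 := h1 (j + 1 + 1)
      have c0 := h2 j
      have c1 := h2 (j + 1)
      have c2 := h2 (j + 1 + 1)
      have d0 := h3 j
      have d1 := h3 (j + 1)
      have d2 := h3 (j + 1 + 1)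
      have e1 := (ganti (u (j + 1) - u j) (u' (j + 1) - u j) (by linarith) (by linarith)).2
      have e2 := (ganti (u' (j + 1) - u' j) (u' (j + 1) - u j) (by linarith) (by linarith)).1
      have e3 := (ganti (u (j + 1 + 1) - u (j + 1)) (u' (j + 1 + 1) - u (j + 1))
        (by linarith) (by linarith)).1
      have e4 := (ganti (u' (j + 1 + 1) - u' (j + 1)) (u' (j + 1 + 1) - u (j + 1))
        (by linarith) (by linarith)).2
      have p0 : 0 ≤ u (j + 1) := by
        refine le_trans ?_ b1
        rw [αs]; positivity
      have p1 : u' (j + 1) ≤ 2 * n * L := by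
        refine d1.trans ?_
        rw [βs j hi.2]
        have : (j : ℝ) + 1 ≤ n := by exact_mod_cast hi.2
        nlinarith
      have e5 := hC t _ _ p0 c1 p1
      have e6 := mul_le_mul_of_nonneg_right hK (sub_nonneg.2 c1)
      nlinarith
    · simp only [h, if_neg hi]; exact le_rfl
  have hlo' : ∀ t i, 1 ≤ i ∧ i ≤ n → K * α i < h t α i := by
    intro t i hi
    obtain ⟨j, rfl⟩ : ∃ j, i = j + 1 := ⟨i - 1, by omega⟩
    rw [hs t α j hi.2]
    have f := hcond t (2 * j + 1) (by omega) (by omega)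
    rw [show 2 * j + 1 + 1 = 2 * (j + 1) by ring, pow_mul] at f
    norm_num at f
    have q : α (j + 1 + 1) - α (j + 1) = 2 * L := by rw [αs, αs]; push_cast; ring
    have q2 : L ≤ α (j + 1) - α j ∧ α (j + 1) - α j ≤ 2 * L := by
      rcases j with _ | j
      · rw [αs, α0]; simp; linarith
      · rw [αs, αs]; push_cast; constructor <;> linarith
    have e := (ganti _ _ q2.1 q2.2).1
    rw [q]
    have : F t (α (j + 1)) < 0 := by rw [αs]; exact f
    linarith
  have hhi' : ∀ t i, 1 ≤ i ∧ i ≤ n → h t β i < K * β i := by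
    intro t i hi
    obtain ⟨j, rfl⟩ : ∃ j, i = j + 1 := ⟨i - 1, by omega⟩
    rw [hs t β j hi.2]
    have f := hcond t (2 * (j + 1)) (by omega) (by omega)
    rw [pow_succ, pow_mul] at f
    norm_num at f
    have q : β (j + 1) - β j = 2 * L := by
      rcases j with _ | j
      · rw [βs _ hi.2, β0]; simp
      · rw [βs _ hi.2, βs _ (by omega)]; push_cast; ring
    have q2 : L ≤ β (j + 1 + 1) - β (j + 1) ∧ β (j + 1 + 1) - β (j + 1) ≤ 2 * L := by
      by_cases hj : j + 1 = n
      · rw [hj, βn, ← hj, βs _ hi.2]; push_cast; constructor <;> linarith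
      · rw [βs _ hi.2, βs _ (by omega)]; push_cast; constructor <;> linarith
    have e := (ganti _ _ q2.1 q2.2).1
    rw [q]
    have : 0 < F t (β (j + 1)) := by
      rw [βs _ hi.2]
      convert f using 2
      ring
    linarith
  have hcont : ∀ u : ℝ → ℕ → ℝ, (∀ i, Continuous fun t => u t i) →
      ∀ i, Continuous fun t => h t (u t) i := by
    intro u hu i
    have hFc : Continuous fun u : ℝ × ℝ => F u.1 u.2 := hF.continuous
    by_cases hi : 1 ≤ i ∧ i ≤ n
    · simp only [h, if_pos hi]
      have c1 := hu i
      have c2 := hu (i - 1)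
      have c3 := hu (i + 1)
      have c4 : Continuous fun t => F t (u t i) := hFc.comp (continuous_id.prodMk c1)
      fun_prop
    · simp only [h, if_neg hi]; fun_prop
  have hper : ∀ t u i, h (t + T) u i = h t u i := by
    intro t u i
    simp only [h, hFper]
  have hlo : ∀ t i, μ * ν * α i ≤ h t α i := by
    intro t i
    rw [← hKd]
    by_cases hi : 1 ≤ i ∧ i ≤ n
    · exact (hlo' t i hi).le
    · simp only [h, if_neg hi]; exact le_rfl
  have hhi : ∀ t i, h t β i ≤ μ * ν * β i := by
    intro t i
    rw [← hKd]
    by_cases hi : 1 ≤ i ∧ i ≤ n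
    · exact (hhi' t i hi).le
    · rw [βout i hi]; simp only [h, if_neg hi]; exact le_rfl
  obtain ⟨u, w, hu, hw, hp, hb, hlt, hgt⟩ := chain_abstract μ ν T L hμ hν α β
    (fun i => (hαβ' i).1) (fun i => (hαβ' i).2) h hcont hper hmono hlo hhi
  · have pin : ∀ t i, ¬ (1 ≤ i ∧ i ≤ n) → u t i = α i := fun t i hi => by
      have := hb t i
      rw [βout i hi] at this
      exact le_antisymm this.2 this.1
    refine ⟨u, fun t i => w t i - ν * u t i, fun t => ?_, fun t => ?_, fun t i h1 h2 => ?_,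
      fun t i h1 h2 => ?_, fun t i h1 h2 => ?_⟩
    · rw [pin t 0 (by omega), α0]
    · rw [pin t (n + 1) (by omega), αs]
    · refine ⟨hu t i, ((hw t i).sub ((hu t i).const_mul ν)).congr_deriv ?_⟩
      simp only [h, if_pos (And.intro h1 h2), g, hKd, hνd]
      ring
    · dsimp only
      rw [(hp t i).1, (hp t i).2]; exact ⟨rfl, rfl⟩
    · have hi : 1 ≤ i ∧ i ≤ n := ⟨h1, h2⟩
      have A1 := hlt i (fun t => by
        rw [← hKd]
        exact (hlo' t i hi).trans_le (hmono t _ _ i (fun _ => le_rfl) (fun j => (hb t j).1)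
          (fun j => (hb t j).2))) t
      have A2 := hgt i (fun t => by
        rw [← hKd]
        exact (hmono t _ _ i (fun j => (hb t j).1)
          (fun j => (hb t j).2) (fun _ => le_rfl)).trans_lt (hhi' t i hi)) t
      have e1 : α i = (2 * (i : ℝ) - 1) * L := if_neg (by omega)
      have e2 : β i = 2 * (i : ℝ) * L := if_pos hi
      rw [← e1, ← e2]
      exact ⟨A1, A2⟩
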